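/- arXiv:0704.1707 — 3 statements merged into one kernel-verified Lean document; each statement's English description precedes it below -/
import Mathlib

section
/- Uustalu's interaction formula is BiInt-valid: for every BiInt model (W, R, ϑ), every world w ∈ W, and all atoms p, q, r, the world w forces the formula p → (q ∨ (r → ((p -< q) ∧ r))). -/
/-- Formulae of bi-intuitionistic logic. -/
inductive BiFml : Type where
  | atom : ℕ → BiFml
  | top  : BiFml
  | bot  : BiFml
  | and  : BiFml → BiFml → BiFml
  | or   : BiFml → BiFml → BiFml
  | imp  : BiFml → BiFml → BiFml
  | excl : BiFml → BiFml → BiFml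

/-- A Kripke model for bi-intuitionistic logic. -/
structure BiModel where
  W : Type
  R : W → W → Prop
  refl : ∀ w, R w w
  trans : ∀ u v w, R u v → R v w → R u w
  val : W → ℕ → Bool
  persist : ∀ w u p, val w p = true → R w u → val u p = true

/-- Forcing of a formula at a world. -/
def BiModel.Forces (M : BiModel) : M.W → BiFml → Prop
  | w, .atom p => M.val w p = true
  | _, .top => True
  | _, .bot => False
  | w, .and φ ψ => M.Forces w φ ∧ M.Forces w ψ
  | w, .or φ ψ => M.Forces w φ ∨ M.Forces w ψ
  | w, .imp φ ψ => ∀ u, M.R w u → (¬ M.Forces u φ ∨ M.Forces u ψ)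
  | w, .excl φ ψ => ∃ u, M.R u w ∧ M.Forces u φ ∧ ¬ M.Forces u ψ

/-- A world forces a set of formulae. -/
def BiModel.ForcesSet (M : BiModel) (w : M.W) (Γ : Set BiFml) : Prop :=
  ∀ φ ∈ Γ, M.Forces w φ

/-- A world rejects a set of formulae. -/
def BiModel.RejectsSet (M : BiModel) (w : M.W) (Δ : Set BiFml) : Prop :=
  ∀ φ ∈ Δ, ¬ M.Forces w φ

/-- Uustalu's interaction formula is BiInt-valid. -/
theorem uustalu_formula_valid (M : BiModel) (w : M.W) (p q r : ℕ) :
    M.Forces w (BiFml.imp (BiFml.atom p)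
      (BiFml.or (BiFml.atom q)
        (BiFml.imp (BiFml.atom r)
          (BiFml.and (BiFml.excl (BiFml.atom p) (BiFml.atom q)) (BiFml.atom r))))) := by
  intro u _
  by_cases hp : M.Forces u (BiFml.atom p)
  · right
    by_cases hq : M.Forces u (BiFml.atom q)
    · exact Or.inl hq
    · right
      intro v huv
      by_cases hr : M.Forces v (BiFml.atom r)
      -- `u` itself, lying below `v`, witnesses the exclusion at `v`.
      · exact Or.inr ⟨⟨u, huv, hp, hq⟩, hr⟩
      · exact Or.inl hr
  · exact Or.inl hp
end

section
/- Di-tree model property: for all finite sets of BiInt formulae Γ and Δ, if the sequent Γ ⊢ Δ is falsifiable, then it is falsifiable at some world of a BiInt model (W, R, ϑ) in which W is finite and there exists an edge relation E on W such that R is the reflexive-transitive closure of E and the undirected simple graph obtained from E (by forgetting edge directions and loops) is a tree (connected and acyclic). -/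
namespace BiFml

/-- Nesting depth of the intensional connectives `→` and `-<`. -/
def depth : BiFml → ℕ
  | .atom _ => 0
  | .top => 0
  | .bot => 0
  | .and φ ψ => max φ.depth ψ.depth
  | .or φ ψ => max φ.depth ψ.depth
  | .imp φ ψ => max φ.depth ψ.depth + 1
  | .excl φ ψ => max φ.depth ψ.depth + 1

/-- The set of subformulae of a formula, including the formula itself. -/
def sub : BiFml → Set BiFml
  | .atom p => {.atom p}
  | .top => {.top}
  | .bot => {.bot}
  | .and φ ψ => insert (.and φ ψ) (φ.sub ∪ ψ.sub)
  | .or φ ψ => insert (.or φ ψ) (φ.sub ∪ ψ.sub)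
  | .imp φ ψ => insert (.imp φ ψ) (φ.sub ∪ ψ.sub)
  | .excl φ ψ => insert (.excl φ ψ) (φ.sub ∪ ψ.sub)

theorem sub_finite (φ : BiFml) : φ.sub.Finite := by
  induction φ with
  | atom p => exact Set.finite_singleton _
  | top => exact Set.finite_singleton _
  | bot => exact Set.finite_singleton _
  | and φ ψ h1 h2 => exact (h1.union h2).insert _
  | or φ ψ h1 h2 => exact (h1.union h2).insert _
  | imp φ ψ h1 h2 => exact (h1.union h2).insert _
  | excl φ ψ h1 h2 => exact (h1.union h2).insert _

theorem self_mem_sub (φ : BiFml) : φ ∈ φ.sub := by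
  cases φ <;> simp [sub]

end BiFml

namespace BiModel

theorem forces_mono (M : BiModel) {w u : M.W} (φ : BiFml) (hwu : M.R w u)
    (h : M.Forces w φ) : M.Forces u φ := by
  induction φ with
  | atom p => exact M.persist _ _ _ h hwu
  | top => trivial
  | bot => exact h
  | and φ ψ h1 h2 => exact ⟨h1 h.1, h2 h.2⟩
  | or φ ψ h1 h2 => exact h.imp h1 h2
  | imp φ ψ _ _ => exact fun v hv => h v (M.trans _ _ _ hwu hv)
  | excl φ ψ _ _ =>
    obtain ⟨v, hv, h'⟩ := h
    exact ⟨v, M.trans _ _ _ hv hwu, h'⟩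

/-! ### Filtration -/

/-- The formulae of `S` forced at the world `w`. -/
def theoryIn (M : BiModel) (S : Set BiFml) (w : M.W) : Set BiFml :=
  {φ ∈ S | M.Forces w φ}

open Classical in
/-- The filtration of `M` through `S`: its worlds are the realised `S`-theories, ordered by
inclusion. -/
noncomputable def filtration (M : BiModel) (S : Set BiFml) : BiModel where
  W := Set.range (M.theoryIn S)
  R X Y := X.1 ⊆ Y.1
  refl _ := subset_rfl
  trans _ _ _ h1 h2 := h1.trans h2
  val X p := decide (BiFml.atom p ∈ X.1)
  persist _ _ _ h1 h2 := by
    simp only [decide_eq_true_eq] at h1 ⊢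
    exact h2 h1

/-- The world of the filtration represented by `w`. -/
def toFiltration (M : BiModel) (S : Set BiFml) (w : M.W) : (M.filtration S).W :=
  ⟨M.theoryIn S w, w, rfl⟩

theorem finite_filtration (M : BiModel) {S : Set BiFml} (hS : S.Finite) :
    Finite (M.filtration S).W := by
  refine Set.Finite.to_subtype (hS.finite_subsets.subset ?_)
  rintro _ ⟨w, rfl⟩
  exact fun φ h => h.1

theorem filtration_antisymm (M : BiModel) (S : Set BiFml) (X Y : (M.filtration S).W)
    (h1 : (M.filtration S).R X Y) (h2 : (M.filtration S).R Y X) : X = Y :=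
  Subtype.ext (Set.Subset.antisymm h1 h2)

theorem filtration_R_of_R (M : BiModel) (S : Set BiFml) {w u : M.W} (h : M.R w u) :
    (M.filtration S).R (M.toFiltration S w) (M.toFiltration S u) :=
  fun φ hφ => ⟨hφ.1, M.forces_mono φ h hφ.2⟩

theorem filtration_forces (M : BiModel) (S : Set BiFml) (φ : BiFml) (hφ : φ.sub ⊆ S) (w : M.W) :
    (M.filtration S).Forces (M.toFiltration S w) φ ↔ M.Forces w φ := by
  induction φ generalizing w with
  | atom p =>
    have : BiFml.atom p ∈ S := hφ (BiFml.self_mem_sub _)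
    simp [Forces, filtration, toFiltration, theoryIn, this]
  | top => simp [Forces]
  | bot => simp [Forces]
  | and φ ψ h1 h2 =>
    simp only [BiFml.sub, Set.insert_subset_iff, Set.union_subset_iff] at hφ
    simp [Forces, h1 hφ.2.1, h2 hφ.2.2]
  | or φ ψ h1 h2 =>
    simp only [BiFml.sub, Set.insert_subset_iff, Set.union_subset_iff] at hφ
    simp [Forces, h1 hφ.2.1, h2 hφ.2.2]
  | imp φ ψ h1 h2 =>
    simp only [BiFml.sub, Set.insert_subset_iff, Set.union_subset_iff] at hφ
    constructor
    · intro h u hu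
      rw [← h1 hφ.2.1, ← h2 hφ.2.2]
      exact h _ (M.filtration_R_of_R S hu)
    · rintro h ⟨_, u, rfl⟩ hu
      have hu' : M.Forces u (.imp φ ψ) := (hu ⟨hφ.1, h⟩).2
      have := hu' u (M.refl u)
      rwa [← h1 hφ.2.1, ← h2 hφ.2.2] at this
  | excl φ ψ h1 h2 =>
    simp only [BiFml.sub, Set.insert_subset_iff, Set.union_subset_iff] at hφ
    constructor
    · rintro ⟨⟨_, u, rfl⟩, hu, h⟩
      change (M.filtration S).Forces (M.toFiltration S u) φ ∧
        ¬ (M.filtration S).Forces (M.toFiltration S u) ψ at h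
      rw [h1 hφ.2.1, h2 hφ.2.2] at h
      -- `u` itself forces the exclusion, and inclusion of theories transports it to `w`.
      exact (hu ⟨hφ.1, u, M.refl u, h⟩ : BiFml.excl φ ψ ∈ M.theoryIn S w).2
    · rintro ⟨u, hu, h⟩
      rw [← h1 hφ.2.1, ← h2 hφ.2.2] at h
      exact ⟨_, M.filtration_R_of_R S hu, h⟩

/-! ### Paths in a model -/

/-- One entry of a path: the world reached, the direction of the step leading there
(`true` for up), and the number of changes of direction so far. -/
abbrev Entry (M : BiModel) (n : ℕ) : Type := M.W × Bool × Fin (n + 1)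

variable {M : BiModel} {n : ℕ}

/-- The strict relation underlying a step in the given direction. -/
def Moves (M : BiModel) (up : Bool) (w u : M.W) : Prop :=
  w ≠ u ∧ if up then M.R w u else M.R u w

/-- `Step p c`: a path ending in the entry `p` may be extended by the entry `c`. The type of the
counter enforces that there are at most `n` changes of direction. -/
def Step (p c : Entry M n) : Prop :=
  M.Moves c.2.1 p.1 c.1 ∧
    (c.2.2 : ℕ) = (p.2.2 : ℕ) + if c.2.1 = p.2.1 then 0 else 1

/-- The entry at the root of the paths starting in `r`. The conventional direction "up" assigned
to it is immaterial. -/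
def rootEntry (r : M.W) (n : ℕ) : Entry M n := (r, true, 0)

/-- The last entry of a path. Paths are lists with the most recent entry first and the root entry
left out. -/
def cur (r : M.W) (l : List (Entry M n)) : Entry M n := l.headD (rootEntry r n)

/-- The lists that represent paths from `r`. -/
def Valid (r : M.W) : List (Entry M n) → Prop
  | [] => True
  | c :: l => Step (cur r l) c ∧ Valid r l

/-- Paths from `r` with at most `n` changes of direction. -/
abbrev Node (r : M.W) (n : ℕ) : Type := {l : List (Entry M n) // Valid r l}

/-- The endpoint of a path. -/
def Node.lab {r : M.W} (t : Node r n) : M.W := (cur r t.1).1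

/-- The direction of the last step of a path. -/
def Node.dir {r : M.W} (t : Node r n) : Bool := (cur r t.1).2.1

/-- The number of changes of direction along a path. -/
def Node.lev {r : M.W} (t : Node r n) : ℕ := (cur r t.1).2.2

/-- `Child s t`: the path `t` extends the path `s` by one step. -/
def Child {r : M.W} (s t : Node r n) : Prop := ∃ c, t.1 = c :: s.1

/-- The oriented edges of the unravelling: an extension by an upward step lies above the shorter
path, an extension by a downward step below it. -/
def Edge {r : M.W} (s t : Node r n) : Prop :=
  (Child s t ∧ t.dir = true) ∨ (Child t s ∧ s.dir = false)

theorem Child.spec {r : M.W} {s t : Node r n} (h : Child s t) :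
    M.Moves t.dir s.lab t.lab ∧ t.lev = s.lev + if t.dir = s.dir then 0 else 1 := by
  obtain ⟨c, hc⟩ := h
  obtain ⟨t, ht⟩ := t
  obtain rfl : t = c :: s.1 := hc
  exact ht.1

theorem exists_child {r : M.W} (s : Node r n) (d : Bool) (u : M.W) (hu : M.Moves d s.lab u)
    (hn : s.lev < n) : ∃ t : Node r n, Child s t ∧ t.lab = u ∧ t.dir = d := by
  have hlt : s.lev + (if d = s.dir then 0 else 1) < n + 1 := by split <;> omega
  exact ⟨⟨(u, d, ⟨_, hlt⟩) :: s.1, ⟨hu, rfl⟩, s.2⟩, ⟨_, rfl⟩, rfl, rfl⟩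

theorem Edge.lab_le {r : M.W} {s t : Node r n} (h : Edge s t) : M.R s.lab t.lab := by
  rcases h with ⟨h, hd⟩ | ⟨h, hd⟩
  · have := h.spec.1.2
    rwa [hd, if_pos rfl] at this
  · have := h.spec.1.2
    rwa [hd, if_neg Bool.false_ne_true] at this

theorem lab_le {r : M.W} {s t : Node r n} (h : Relation.ReflTransGen Edge s t) :
    M.R s.lab t.lab := by
  induction h with
  | refl => exact M.refl _
  | tail _ h ih => exact M.trans _ _ _ ih h.lab_le

theorem level_up {r : M.W} {s t : Node r n} (h : Relation.ReflTransGen Edge s t) :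
    t.lev ≤ s.lev + 1 := by
  -- The extra unit is only used once the last step is upward, and then it is not used again.
  have key : t.lev ≤ s.lev ∨ (t.lev ≤ s.lev + 1 ∧ t.dir = true) := by
    induction h with
    | refl => exact Or.inl le_rfl
    | tail _ h ih =>
      rcases h with ⟨h, hd⟩ | ⟨h, hd⟩ <;> have h2 := h.spec.2 <;> grind
  omega

theorem level_down {r : M.W} {s t : Node r n} (h : Relation.ReflTransGen Edge s t) :
    s.lev ≤ t.lev + 1 := by
  have key : s.lev ≤ t.lev ∨ (s.lev ≤ t.lev + 1 ∧ s.dir = false) := by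
    induction h using Relation.ReflTransGen.head_induction_on with
    | refl => exact Or.inl le_rfl
    | head h _ ih =>
      rcases h with ⟨h, hd⟩ | ⟨h, hd⟩ <;> have h2 := h.spec.2 <;> grind
  omega

/-! ### Finiteness of the set of paths -/

/-- The worlds still available in the given direction. -/
def ahead (M : BiModel) (up : Bool) (w : M.W) : Set M.W :=
  {u | if up then M.R w u else M.R u w}

/-- A bound on the number of steps by which a path ending in the given entry can be extended. -/
noncomputable def fuel (s : Entry M n) : ℕ :=
  (n - s.2.2) * (Nat.card M.W + 1) + (M.ahead s.2.1 s.1).ncard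

theorem ncard_ahead_lt [Finite M.W] (anti : ∀ a b, M.R a b → M.R b a → a = b) {d : Bool}
    {w u : M.W} (h : M.Moves d w u) : (M.ahead d u).ncard < (M.ahead d w).ncard := by
  refine Set.ncard_lt_ncard ⟨fun v hv => ?_, fun hsub => ?_⟩ (Set.toFinite _)
  · cases d
    · exact M.trans _ _ _ hv h.2
    · exact M.trans _ _ _ h.2 hv
  · have hw : w ∈ M.ahead d w := by cases d <;> exact M.refl w
    have hu := hsub hw
    cases d
    · exact h.1 (anti _ _ hu h.2)
    · exact h.1 (anti _ _ h.2 hu)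

theorem Step.fuel_lt [Finite M.W] (anti : ∀ a b, M.R a b → M.R b a → a = b)
    {p c : Entry M n} (h : Step p c) : fuel c < fuel p := by
  obtain ⟨hm, hl⟩ := h
  obtain ⟨w, d, k⟩ := p
  obtain ⟨u, e, m⟩ := c
  simp only at hm hl
  unfold fuel
  by_cases hd : e = d
  · subst hd
    have := ncard_ahead_lt anti hm
    simp only [if_true, add_zero] at hl
    simp only [hl]
    omega
  · rw [if_neg hd] at hl
    have hm' := m.2
    obtain ⟨j, hj⟩ : ∃ j, n - (k : ℕ) = j + 1 := ⟨n - (k : ℕ) - 1, by omega⟩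
    have hj' : n - (m : ℕ) = j := by omega
    have := Set.ncard_le_card (M.ahead e u)
    simp only [hj, hj']
    rw [Nat.succ_mul]
    omega

theorem Valid.length_le [Finite M.W] (anti : ∀ a b, M.R a b → M.R b a → a = b) {r : M.W}
    {l : List (Entry M n)} (h : Valid r l) :
    l.length + fuel (cur r l) ≤ fuel (rootEntry r n) := by
  induction l with
  | nil => simp [cur]
  | cons c l ih =>
    have h1 := ih h.2
    have h2 : fuel c < fuel (cur r l) := h.1.fuel_lt anti
    have h3 : cur r (c :: l) = c := rfl
    rw [h3, List.length_cons]
    omega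

theorem finite_node [Finite M.W] (anti : ∀ a b, M.R a b → M.R b a → a = b) (r : M.W) (n : ℕ) :
    Finite (Node r n) := by
  refine Set.Finite.to_subtype
    ((List.finite_length_le (Entry M n) (fuel (rootEntry r n))).subset fun l hl => ?_)
  have := Valid.length_le anti hl
  change l.length ≤ _
  omega

/-! ### The paths form a di-tree -/

/-- The empty path. -/
def rootNode (r : M.W) (n : ℕ) : Node r n := ⟨[], trivial⟩

/-- The path without its last step. -/
def Node.parent {r : M.W} (t : Node r n) : Node r n :=
  ⟨t.1.tail, by
    obtain ⟨_ | ⟨c, l⟩, h⟩ := t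
    · trivial
    · exact h.2⟩

theorem adj_iff {r : M.W} (s t : Node r n) :
    (SimpleGraph.fromRel (Edge (r := r) (n := n))).Adj s t ↔ Child s t ∨ Child t s := by
  rw [SimpleGraph.fromRel_adj]
  constructor
  · rintro ⟨_, (h | h) | (h | h)⟩
    exacts [Or.inl h.1, Or.inr h.1, Or.inr h.1, Or.inl h.1]
  · intro h
    refine ⟨?_, ?_⟩
    · rintro rfl
      obtain ⟨c, hc⟩ := h.elim id id
      simpa using congrArg List.length hc
    · rcases h with h | h
      · cases hd : t.dir
        exacts [Or.inr (Or.inr ⟨h, hd⟩), Or.inl (Or.inl ⟨h, hd⟩)]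
      · cases hd : s.dir
        exacts [Or.inl (Or.inr ⟨h, hd⟩), Or.inr (Or.inl ⟨h, hd⟩)]

theorem connected_fromRel (r : M.W) (n : ℕ) :
    (SimpleGraph.fromRel (Edge (r := r) (n := n))).Connected := by
  have key : ∀ (l : List (Entry M n)) (h : Valid r l),
      (SimpleGraph.fromRel (Edge (r := r) (n := n))).Reachable (rootNode r n) ⟨l, h⟩ := by
    intro l
    induction l with
    | nil => exact fun _ => SimpleGraph.Reachable.refl _
    | cons c l ih =>
      intro h
      exact (ih h.2).trans (SimpleGraph.Adj.reachable ((adj_iff _ _).2 (Or.inl ⟨c, rfl⟩)))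
  have : Nonempty (Node r n) := ⟨rootNode r n⟩
  exact ⟨fun s t => (key _ s.2).symm.trans (key _ t.2)⟩

/-- A connected graph is a tree when it has fewer edges than vertices; here each edge joins a
nonempty path to its parent. -/
theorem isTree_fromRel (r : M.W) (n : ℕ) [Finite (Node r n)] :
    (SimpleGraph.fromRel (Edge (r := r) (n := n))).IsTree := by
  rw [SimpleGraph.isTree_iff_connected_and_card]
  have hc := connected_fromRel r n
  refine ⟨hc, le_antisymm ?_ hc.card_vert_le_card_edgeSet_add_one⟩
  have hsub : (SimpleGraph.fromRel (Edge (r := r) (n := n))).edgeSet ⊆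
      (fun t : Node r n => s(t, t.parent)) '' {rootNode r n}ᶜ := by
    have hchild : ∀ s t : Node r n, Child s t → t ≠ rootNode r n ∧ t.parent = s := by
      rintro s t ⟨c, hc⟩
      refine ⟨?_, Subtype.ext ?_⟩
      · rintro rfl
        simp [rootNode] at hc
      · simp [Node.parent, hc]
    intro e
    induction e with
    | _ s t =>
      intro he
      rw [SimpleGraph.mem_edgeSet, adj_iff] at he
      rcases he with h | h
      · obtain ⟨h1, h2⟩ := hchild _ _ h
        exact ⟨t, h1, by simp only [h2]; exact Sym2.eq_swap⟩
      · obtain ⟨h1, h2⟩ := hchild _ _ h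
        exact ⟨s, h1, by simp only [h2]⟩
  have h1 := Set.ncard_le_ncard hsub (Set.toFinite _)
  have h2 := Set.ncard_image_le (f := fun t : Node r n => s(t, t.parent))
    (Set.toFinite ({rootNode r n}ᶜ : Set (Node r n)))
  have h3 := Set.ncard_add_ncard_compl ({rootNode r n} : Set (Node r n))
  rw [Set.ncard_singleton] at h3
  rw [Nat.card_coe_set_eq]
  omega

/-! ### The unravelled model -/

/-- The unravelling of `M` from `r`, with at most `n` changes of direction. -/
def unravel (M : BiModel) (r : M.W) (n : ℕ) : BiModel where
  W := Node r n
  R := Relation.ReflTransGen Edge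
  refl _ := Relation.ReflTransGen.refl
  trans _ _ _ := Relation.ReflTransGen.trans
  val t p := M.val t.lab p
  persist _ _ p h1 h2 := M.persist _ _ p h1 (lab_le h2)

theorem unravel_forces (r : M.W) (φ : BiFml) (t : Node r n) (ht : φ.depth + t.lev ≤ n) :
    (M.unravel r n).Forces t φ ↔ M.Forces t.lab φ := by
  induction φ generalizing t with
  | atom p => rfl
  | top => rfl
  | bot => rfl
  | and φ ψ h1 h2 =>
    simp only [BiFml.depth] at ht
    simp only [Forces]
    rw [h1 t (by omega), h2 t (by omega)]
  | or φ ψ h1 h2 =>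
    simp only [BiFml.depth] at ht
    simp only [Forces]
    rw [h1 t (by omega), h2 t (by omega)]
  | imp φ ψ h1 h2 =>
    simp only [BiFml.depth] at ht
    have key : ∀ s, Relation.ReflTransGen Edge t s →
        ((¬ (M.unravel r n).Forces s φ ∨ (M.unravel r n).Forces s ψ) ↔
          (¬ M.Forces s.lab φ ∨ M.Forces s.lab ψ)) := by
      intro s hs
      have := level_up hs
      rw [h1 s (by omega), h2 s (by omega)]
    constructor
    · intro h u hu
      by_cases hne : t.lab = u
      · subst hne
        exact (key t .refl).1 (h t .refl)
      · obtain ⟨s, hs, rfl, hd⟩ := exists_child t true u ⟨hne, hu⟩ (by omega)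
        have hR : Relation.ReflTransGen Edge t s := .single (Or.inl ⟨hs, hd⟩)
        exact (key s hR).1 (h s hR)
    · exact fun h s hs => (key s hs).2 (h _ (lab_le hs))
  | excl φ ψ h1 h2 =>
    simp only [BiFml.depth] at ht
    have key : ∀ s, Relation.ReflTransGen Edge s t →
        (((M.unravel r n).Forces s φ ∧ ¬ (M.unravel r n).Forces s ψ) ↔
          (M.Forces s.lab φ ∧ ¬ M.Forces s.lab ψ)) := by
      intro s hs
      have := level_down hs
      rw [h1 s (by omega), h2 s (by omega)]
    constructor
    · rintro ⟨s, hs, h⟩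
      exact ⟨s.lab, lab_le hs, (key s hs).1 h⟩
    · rintro ⟨u, hu, h⟩
      by_cases hne : t.lab = u
      · subst hne
        exact ⟨t, .refl, (key t .refl).2 h⟩
      · obtain ⟨s, hs, rfl, hd⟩ := exists_child t false u ⟨hne, hu⟩ (by omega)
        have hR : Relation.ReflTransGen Edge s t := .single (Or.inr ⟨hs, hd⟩)
        exact ⟨s, hR, (key s hR).2 h⟩

end BiModel

/-- Di-tree model property: every falsifiable sequent is falsifiable in a finite
di-tree model. -/
theorem ditree_model_property (Γ Δ : Set BiFml) (hΓ : Γ.Finite) (hΔ : Δ.Finite)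
    (h : ∃ (M : BiModel) (w : M.W), M.ForcesSet w Γ ∧ M.RejectsSet w Δ) :
    ∃ (M : BiModel) (w : M.W),
      Finite M.W ∧
      (∃ E : M.W → M.W → Prop,
        M.R = Relation.ReflTransGen E ∧ (SimpleGraph.fromRel E).IsTree) ∧
      M.ForcesSet w Γ ∧ M.RejectsSet w Δ := by
  obtain ⟨M, w, hF, hR⟩ := h
  have hfin : (Γ ∪ Δ).Finite := hΓ.union hΔ
  let S : Set BiFml := ⋃ φ ∈ Γ ∪ Δ, φ.sub
  have hS : S.Finite := hfin.biUnion fun φ _ => φ.sub_finite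
  obtain ⟨n, hn⟩ := (hfin.image BiFml.depth).bddAbove
  have hfilt := M.finite_filtration hS
  let r := M.toFiltration S w
  have hnode : Finite (BiModel.Node r n) :=
    BiModel.finite_node (M.filtration_antisymm S) r n
  have key : ∀ φ ∈ Γ ∪ Δ, ((((M.filtration S).unravel r n).Forces (BiModel.rootNode r n) φ) ↔
      M.Forces w φ) := by
    intro φ hφ
    rw [BiModel.unravel_forces r φ (BiModel.rootNode r n) (hn ⟨φ, hφ, rfl⟩)]
    exact M.filtration_forces S φ (Set.subset_biUnion_of_mem (u := BiFml.sub) hφ) w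
  exact ⟨(M.filtration S).unravel r n, BiModel.rootNode r n, hnode,
    ⟨BiModel.Edge, rfl, BiModel.isTree_fromRel r n⟩,
    fun φ hφ => (key φ (Or.inl hφ)).2 (hF φ hφ),
    fun φ hφ hc => hR φ hφ ((key φ (Or.inr hφ)).1 hc)⟩
end

section
/- Characterisation of BiInt by finite di-trees: a BiInt formula φ is valid in all BiInt models (forced at every world of every model) if and only if φ is valid in all finite BiInt models whose frame is a di-tree of reflexive points, i.e., models (W, R, ϑ) with W finite for which there is an edge relation E on W such that R is the reflexive-transitive closure of E and the undirected simple graph obtained from E (by forgetting edge directions and loops) is a tree. -/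
namespace DiTree

open Relation

/-! ### Depth, subformula closure and persistence -/

/-- Nesting depth of implications and exclusions. -/
def depth : BiFml → ℕ
  | .atom _ => 0
  | .top => 0
  | .bot => 0
  | .and a b => max (depth a) (depth b)
  | .or a b => max (depth a) (depth b)
  | .imp a b => max (depth a) (depth b) + 1
  | .excl a b => max (depth a) (depth b) + 1

/-- Closure of a set of formulae under immediate subformulae. -/
def Closed (S : Finset BiFml) : Prop :=
  ∀ a b, (.and a b ∈ S ∨ .or a b ∈ S ∨ .imp a b ∈ S ∨ .excl a b ∈ S) → a ∈ S ∧ b ∈ S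

theorem exists_closed (φ : BiFml) : ∃ S : Finset BiFml, φ ∈ S ∧ Closed S := by
  classical
  have key : ∀ (φ a b : BiFml), (∀ x y, (φ = .and x y ∨ φ = .or x y ∨ φ = .imp x y ∨
      φ = .excl x y) → x = a ∧ y = b) → (∃ S : Finset BiFml, a ∈ S ∧ Closed S) →
      (∃ S : Finset BiFml, b ∈ S ∧ Closed S) → ∃ S : Finset BiFml, φ ∈ S ∧ Closed S := by
    rintro φ a b h ⟨S, ha, hS⟩ ⟨S', hb, hS'⟩
    refine ⟨insert φ (S ∪ S'), by simp, fun x y hxy => ?_⟩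
    have h1 := h x y
    have h2 := hS x y
    have h3 := hS' x y
    simp only [Finset.mem_insert, Finset.mem_union] at hxy ⊢
    grind
  induction φ with
  | atom p => exact ⟨{.atom p}, by simp, fun a b h => by simp at h⟩
  | top => exact ⟨{.top}, by simp, fun a b h => by simp at h⟩
  | bot => exact ⟨{.bot}, by simp, fun a b h => by simp at h⟩
  | and a b iha ihb => exact key _ a b (by rintro x y h; simp at h; grind) iha ihb
  | or a b iha ihb => exact key _ a b (by rintro x y h; simp at h; grind) iha ihb
  | imp a b iha ihb => exact key _ a b (by rintro x y h; simp at h; grind) iha ihb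
  | excl a b iha ihb => exact key _ a b (by rintro x y h; simp at h; grind) iha ihb

theorem forces_mono (M : BiModel) (φ : BiFml) :
    ∀ {w u : M.W}, M.R w u → M.Forces w φ → M.Forces u φ := by
  induction φ with
  | atom p => exact fun h hw => M.persist _ _ p hw h
  | top => exact fun _ _ => trivial
  | bot => exact fun _ h => h
  | and a b iha ihb => exact fun h hw => ⟨iha h hw.1, ihb h hw.2⟩
  | or a b iha ihb => exact fun h hw => hw.imp (iha h) (ihb h)
  | imp a b _ _ => exact fun h hw v hv => hw v (M.trans _ _ _ h hv)
  | excl a b _ _ => exact fun h ⟨v, hv, hab⟩ => ⟨v, M.trans _ _ _ hv h, hab⟩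

/-! ### Paths and the unravelling -/

/-- A label `(b, a, c)` asks for a step forward (`b = true`) or backward (`b = false`) to a world
forcing `a` and rejecting `c`. -/
abbrev Label : Type := Bool × BiFml × BiFml

/-- The direction of the last step of a path (the head of the list), if there is one. -/
def lastDir (l : List Label) : Option Bool := l.head?.map Prod.fst

/-- The number of maximal runs of steps in the same direction. -/
def level : List Label → ℕ
  | [] => 0
  | x :: l => level l + if lastDir l = some x.1 then 0 else 1

section Unravelling

variable (M : BiModel) (w₀ : M.W) (S : Finset BiFml) (n : ℕ)

/-- `u` answers the request `x` made at `v`, and `v` does not answer it itself. -/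
def Wit (x : Label) (v u : M.W) : Prop :=
  (if x.1 then M.R v u else M.R u v) ∧ M.Forces u x.2.1 ∧ ¬ M.Forces u x.2.2 ∧
    ¬ (M.Forces v x.2.1 ∧ ¬ M.Forces v x.2.2)

open Classical in
/-- The world reached from `w₀` by answering the requests of the path with chosen witnesses;
requests without a witness are skipped. -/
noncomputable def endpoint : List Label → M.W
  | [] => w₀
  | x :: l => if h : ∃ u, Wit M x (endpoint l) u then h.choose else endpoint l

/-- The paths that are nodes of the truncated unravelling: the requests are about formulae of `S`,
each has a witness, and the level is at most `n`. -/
def Valid : List Label → Prop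
  | [] => True
  | x :: l => Valid l ∧ x.2.1 ∈ S ∧ x.2.2 ∈ S ∧ (∃ u, Wit M x (endpoint M w₀ l) u) ∧
      level (x :: l) ≤ n

variable {M w₀ S n}

theorem wit_endpoint {x : Label} {l : List Label} (h : Valid M w₀ S n (x :: l)) :
    Wit M x (endpoint M w₀ l) (endpoint M w₀ (x :: l)) := by
  have h' := h.2.2.2.1
  rw [endpoint, dif_pos h']
  exact h'.choose_spec

/-! ### Finiteness -/

open Classical in
/-- The number of formulae of `S` whose status at `v` can still change in steps of direction `b`:
the rejected ones for forward steps, the forced ones for backward steps. -/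
noncomputable def count (M : BiModel) (S : Finset BiFml) (b : Bool) (v : M.W) : ℕ :=
  (S.filter fun σ => if b then ¬ M.Forces v σ else M.Forces v σ).card

theorem count_lt {x : Label} {v u : M.W} (h1 : x.2.1 ∈ S) (h2 : x.2.2 ∈ S) (h : Wit M x v u) :
    count M S x.1 u < count M S x.1 v := by
  classical
  obtain ⟨b, a, c⟩ := x
  obtain ⟨hR, ha, hc, hv⟩ := h
  dsimp only at *
  unfold count
  apply Finset.card_lt_card
  rw [Finset.ssubset_iff_of_subset]
  · cases b
    · have := forces_mono M a hR ha
      exact ⟨c, by simp; tauto, by simp; tauto⟩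
    · have := fun h => hc (forces_mono M c hR h)
      exact ⟨a, by simp; tauto, by simp; tauto⟩
  · intro σ
    have := fun v u h => @forces_mono M σ v u h
    cases b <;> simp at hR ⊢ <;> grind

theorem count_le (b : Bool) (v : M.W) : count M S b v ≤ S.card := by
  unfold count
  classical exact Finset.card_filter_le _ _

/-- The bound on path lengths, strengthened for the induction by the room left in the last run. -/
theorem length_le : ∀ l : List Label, Valid M w₀ S n l →
    l.length + (match lastDir l with
      | none => 0
      | some b => count M S b (endpoint M w₀ l)) ≤ level l * (S.card + 1)
  | [], _ => by simp [lastDir]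
  | x :: l, h => by
    have ih := length_le l h.1
    have hlt := count_lt h.2.1 h.2.2.1 (wit_endpoint h)
    have hle := count_le (S := S) x.1 (endpoint M w₀ (x :: l))
    have hx : lastDir (x :: l) = some x.1 := rfl
    rw [hx, level]
    simp only [List.length_cons]
    split_ifs with hd
    · rw [hd] at ih
      simp only [add_zero] at ih ⊢
      omega
    · rw [add_mul, one_mul]
      omega

theorem level_le : ∀ l : List Label, Valid M w₀ S n l → level l ≤ n
  | [], _ => Nat.zero_le _
  | _ :: _, h => h.2.2.2.2

theorem finite_nodes : Finite {l : List Label // Valid M w₀ S n l} := by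
  have hL : Finite {x : Label // x.2.1 ∈ S ∧ x.2.2 ∈ S} :=
    Set.Finite.subset (s := Set.univ ×ˢ ((S : Set BiFml) ×ˢ (S : Set BiFml)))
      (Set.finite_univ.prod (S.finite_toSet.prod S.finite_toSet))
      (fun x hx => ⟨trivial, hx⟩)
  have hfin := (List.finite_length_le {x : Label // x.2.1 ∈ S ∧ x.2.2 ∈ S}
    (n * (S.card + 1))).image (List.map Subtype.val)
  refine Set.Finite.subset hfin fun l hl => ?_
  have hmem : ∀ l, Valid M w₀ S n l → ∀ x ∈ l, x.2.1 ∈ S ∧ x.2.2 ∈ S := by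
    intro l
    induction l with
    | nil => simp
    | cons y l ih =>
      intro h x hx
      rcases List.mem_cons.1 hx with rfl | hx
      · exact ⟨h.2.1, h.2.2.1⟩
      · exact ih h.1 x hx
  have hlen : l.length ≤ n * (S.card + 1) :=
    (Nat.le_of_add_right_le (length_le l hl)).trans
      (Nat.mul_le_mul_right _ (level_le l hl))
  obtain ⟨l', rfl⟩ := (Set.range_list_map_coe {x : Label | x.2.1 ∈ S ∧ x.2.2 ∈ S}).symm.subset
    (hmem l hl)
  exact ⟨l', by simpa using hlen, rfl⟩

/-! ### Reachability and levels -/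

/-- The edge from a node to its forward extensions, and from its backward extensions to it. -/
def Edge (x y : {l : List Label // Valid M w₀ S n l}) : Prop :=
  (∃ p, y.1 = (true, p) :: x.1) ∨ (∃ p, x.1 = (false, p) :: y.1)

theorem edge_mono {x y : {l : List Label // Valid M w₀ S n l}} (h : Edge x y) :
    M.R (endpoint M w₀ x.1) (endpoint M w₀ y.1) := by
  obtain ⟨x, hx⟩ := x
  obtain ⟨y, hy⟩ := y
  rcases h with ⟨p, h⟩ | ⟨p, h⟩ <;> dsimp only at h <;> subst h
  · exact (wit_endpoint hy).1
  · exact (wit_endpoint hx).1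

theorem reach_mono {x y : {l : List Label // Valid M w₀ S n l}} (h : ReflTransGen Edge x y) :
    M.R (endpoint M w₀ x.1) (endpoint M w₀ y.1) := by
  induction h with
  | refl => exact M.refl _
  | tail _ h ih => exact M.trans _ _ _ ih (edge_mono h)

theorem level_le_cons (x : Label) (l : List Label) : level l ≤ level (x :: l) := by
  simp [level]

theorem level_cons_le (x : Label) (l : List Label) : level (x :: l) ≤ level l + 1 := by
  rw [level]; split_ifs <;> omega

theorem level_cons_eq {x : Label} {l : List Label} (h : lastDir l = some x.1) :
    level (x :: l) = level l := by
  simp [level, h]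

/-- Once the level has been raised, the path has started to descend along forward steps and can
only continue to do so, within the same run. -/
theorem level_le_of_reach_up {x y : {l : List Label // Valid M w₀ S n l}}
    (h : ReflTransGen Edge x y) :
    level y.1 ≤ level x.1 ∨ (level y.1 ≤ level x.1 + 1 ∧ lastDir y.1 = some true) := by
  induction h with
  | refl => exact Or.inl le_rfl
  | tail _ h ih =>
    rcases h with ⟨p, h⟩ | ⟨p, h⟩
    · rw [h]
      refine Or.inr ⟨?_, rfl⟩
      rcases ih with ih | ⟨ih, hd⟩
      · exact (level_cons_le _ _).trans (by omega)
      · rwa [level_cons_eq hd]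
    · rw [h] at ih
      rcases ih with ih | ⟨-, hd⟩
      · exact Or.inl ((level_le_cons _ _).trans ih)
      · simp [lastDir] at hd

/-- The mirror image of `level_le_of_reach_up`, for paths followed against their direction. -/
theorem level_le_of_reach_down {x y : {l : List Label // Valid M w₀ S n l}}
    (h : ReflTransGen Edge y x) :
    level y.1 ≤ level x.1 ∨ (level y.1 ≤ level x.1 + 1 ∧ lastDir y.1 = some false) := by
  induction h using ReflTransGen.head_induction_on with
  | refl => exact Or.inl le_rfl
  | head h _ ih =>
    rcases h with ⟨p, h⟩ | ⟨p, h⟩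
    · rw [h] at ih
      rcases ih with ih | ⟨-, hd⟩
      · exact Or.inl ((level_le_cons _ _).trans ih)
      · simp [lastDir] at hd
    · rw [h]
      refine Or.inr ⟨?_, rfl⟩
      rcases ih with ih | ⟨ih, hd⟩
      · exact (level_cons_le _ _).trans (by omega)
      · rwa [level_cons_eq hd]

/-! ### The truth lemma -/

variable (M w₀ S n) in
/-- The truncated unravelling, as a model with the valuation pulled back along `endpoint`. -/
noncomputable def treeModel : BiModel where
  W := {l : List Label // Valid M w₀ S n l}
  R := ReflTransGen Edge
  refl _ := ReflTransGen.refl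
  trans _ _ _ := ReflTransGen.trans
  val l p := M.val (endpoint M w₀ l.1) p
  persist _ _ p h hR := M.persist _ _ p h (reach_mono hR)

/-- Below level `n`, every request about formulae of `S` that has an answer in `M` from the endpoint
of a node is answered in the tree: by the node itself, or by one of its children. -/
theorem exists_answer (l : {l : List Label // Valid M w₀ S n l}) (hl : level l.1 + 1 ≤ n)
    {x : Label} (h1 : x.2.1 ∈ S) (h2 : x.2.2 ∈ S) {u : M.W}
    (hR : if x.1 then M.R (endpoint M w₀ l.1) u else M.R u (endpoint M w₀ l.1))
    (ha : M.Forces u x.2.1) (hc : ¬ M.Forces u x.2.2) :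
    ∃ y : {l : List Label // Valid M w₀ S n l},
      (if x.1 then ReflTransGen Edge l y else ReflTransGen Edge y l) ∧ level y.1 ≤ level l.1 + 1 ∧
      M.Forces (endpoint M w₀ y.1) x.2.1 ∧ ¬ M.Forces (endpoint M w₀ y.1) x.2.2 := by
  by_cases hv : M.Forces (endpoint M w₀ l.1) x.2.1 ∧ ¬ M.Forces (endpoint M w₀ l.1) x.2.2
  · exact ⟨l, by split_ifs <;> exact ReflTransGen.refl, by omega, hv⟩
  · have hval : Valid M w₀ S n (x :: l.1) :=
      ⟨l.2, h1, h2, ⟨u, hR, ha, hc, hv⟩, (level_cons_le _ _).trans hl⟩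
    refine ⟨⟨x :: l.1, hval⟩, ?_, level_cons_le _ _, (wit_endpoint hval).2.1,
      (wit_endpoint hval).2.2.1⟩
    obtain ⟨b, p⟩ := x
    cases b
    · exact ReflTransGen.single (Or.inr ⟨p, rfl⟩)
    · exact ReflTransGen.single (Or.inl ⟨p, rfl⟩)

/-- Forcing in the tree agrees with forcing at endpoints, as long as the depth of the formula
does not exceed the number of levels left. -/
theorem truth (hS : Closed S) (φ : BiFml) : φ ∈ S →
    ∀ l : {l : List Label // Valid M w₀ S n l}, depth φ + level l.1 ≤ n →
      ((treeModel M w₀ S n).Forces l φ ↔ M.Forces (endpoint M w₀ l.1) φ) := by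
  induction φ with
  | atom p => exact fun _ l _ => Iff.rfl
  | top => exact fun _ l _ => Iff.rfl
  | bot => exact fun _ l _ => Iff.rfl
  | and a b iha ihb =>
    intro hφ l hl
    obtain ⟨ha, hb⟩ := hS a b (by tauto)
    rw [depth] at hl
    exact and_congr (iha ha l (by omega)) (ihb hb l (by omega))
  | or a b iha ihb =>
    intro hφ l hl
    obtain ⟨ha, hb⟩ := hS a b (by tauto)
    rw [depth] at hl
    exact or_congr (iha ha l (by omega)) (ihb hb l (by omega))
  | imp a b iha ihb =>
    intro hφ l hl
    obtain ⟨ha, hb⟩ := hS a b (by tauto)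
    rw [depth] at hl
    constructor
    · intro h u hu
      by_contra! hc
      obtain ⟨y, hy, hlev, hya, hyb⟩ := exists_answer l (by omega) (x := (true, a, b)) ha hb hu
        hc.1 hc.2
      rcases h y hy with h | h
      · exact h ((iha ha y (by omega)).2 hya)
      · exact hyb ((ihb hb y (by omega)).1 h)
    · intro h y hy
      have hlev : level y.1 ≤ level l.1 + 1 := by
        rcases level_le_of_reach_up hy with h | h <;> omega
      exact (h _ (reach_mono hy)).imp (mt (iha ha y (by omega)).1) (ihb hb y (by omega)).2
  | excl a b iha ihb =>
    intro hφ l hl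
    obtain ⟨ha, hb⟩ := hS a b (by tauto)
    rw [depth] at hl
    constructor
    · rintro ⟨y, hy, hya, hyb⟩
      have hlev : level y.1 ≤ level l.1 + 1 := by
        rcases level_le_of_reach_down hy with h | h <;> omega
      exact ⟨_, reach_mono hy, (iha ha y (by omega)).1 hya, mt (ihb hb y (by omega)).2 hyb⟩
    · rintro ⟨u, hu, hua, hub⟩
      obtain ⟨y, hy, hlev, hya, hyb⟩ := exists_answer l (by omega) (x := (false, a, b)) ha hb hu
        hua hub
      exact ⟨y, hy, (iha ha y (by omega)).2 hya, mt (ihb hb y (by omega)).1 hyb⟩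

/-! ### The tree property -/

/-- The graph is connected because every node is joined to its parent, and it has at most one edge
per non-root node, so it is a tree by counting edges. -/
theorem isTree : (SimpleGraph.fromRel (Edge (M := M) (w₀ := w₀) (S := S) (n := n))).IsTree := by
  classical
  have hfin : Finite {l : List Label // Valid M w₀ S n l} := finite_nodes
  set G := SimpleGraph.fromRel (Edge (M := M) (w₀ := w₀) (S := S) (n := n)) with hG
  let root : {l : List Label // Valid M w₀ S n l} := ⟨[], trivial⟩
  have hadj : ∀ (x : Label) (l : List Label) (h : Valid M w₀ S n (x :: l)),
      G.Adj ⟨x :: l, h⟩ ⟨l, h.1⟩ := by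
    rintro ⟨b, p⟩ l h
    rw [hG, SimpleGraph.fromRel_adj]
    refine ⟨by simp, ?_⟩
    cases b
    · exact Or.inl (Or.inr ⟨p, rfl⟩)
    · exact Or.inr (Or.inl ⟨p, rfl⟩)
  have hreach : ∀ (l : List Label) (h : Valid M w₀ S n l), G.Reachable ⟨l, h⟩ root := by
    intro l
    induction l with
    | nil => exact fun h => SimpleGraph.Reachable.refl _
    | cons x l ih => exact fun h => (hadj x l h).reachable.trans (ih h.1)
  have hconn : G.Connected :=
    { preconnected := fun x y => (hreach x.1 x.2).trans (hreach y.1 y.2).symm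
      nonempty := ⟨root⟩ }
  rw [SimpleGraph.isTree_iff_connected_and_card]
  refine ⟨hconn, le_antisymm ?_ hconn.card_vert_le_card_edgeSet_add_one⟩
  have hvalid_tail : ∀ l : List Label, Valid M w₀ S n l → Valid M w₀ S n l.tail
    | [], h => h
    | _ :: _, h => h.1
  let parentEdge : {l : List Label // Valid M w₀ S n l} →
      Sym2 {l : List Label // Valid M w₀ S n l} := fun x => s(x, ⟨x.1.tail, hvalid_tail x.1 x.2⟩)
  have hsub : G.edgeSet ⊆ parentEdge '' {root}ᶜ := by
    intro e
    induction e using Sym2.ind with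
    | _ x y =>
      obtain ⟨x, hx⟩ := x
      obtain ⟨y, hy⟩ := y
      rw [SimpleGraph.mem_edgeSet, hG, SimpleGraph.fromRel_adj]
      rintro ⟨-, (⟨p, h⟩ | ⟨p, h⟩) | (⟨p, h⟩ | ⟨p, h⟩)⟩ <;> dsimp only at h <;> subst h
      · exact ⟨⟨_, hy⟩, fun h => by simpa [root] using congrArg Subtype.val h, Sym2.eq_swap⟩
      · exact ⟨⟨_, hx⟩, fun h => by simpa [root] using congrArg Subtype.val h, rfl⟩
      · exact ⟨⟨_, hx⟩, fun h => by simpa [root] using congrArg Subtype.val h, rfl⟩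
      · exact ⟨⟨_, hy⟩, fun h => by simpa [root] using congrArg Subtype.val h, Sym2.eq_swap⟩
  have h1 : G.edgeSet.ncard ≤ ({root}ᶜ : Set {l : List Label // Valid M w₀ S n l}).ncard :=
    (Set.ncard_le_ncard hsub (Set.toFinite _)).trans (Set.ncard_image_le (Set.toFinite _))
  have h2 := Set.ncard_add_ncard_compl ({root} : Set {l : List Label // Valid M w₀ S n l})
  rw [Set.ncard_singleton] at h2
  rw [Nat.card_coe_set_eq]
  omega

end Unravelling

end DiTree

/-- BiInt is characterised by finite di-tree models. -/
theorem biint_characterised_by_finite_ditrees (φ : BiFml) :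
    (∀ (M : BiModel) (w : M.W), M.Forces w φ) ↔
    (∀ (M : BiModel), Finite M.W →
      (∃ E : M.W → M.W → Prop,
        M.R = Relation.ReflTransGen E ∧ (SimpleGraph.fromRel E).IsTree) →
      ∀ w : M.W, M.Forces w φ) := by
  refine ⟨fun h M _ _ w => h M w, fun h M w => ?_⟩
  obtain ⟨S, hφ, hS⟩ := DiTree.exists_closed φ
  have hroot := h (DiTree.treeModel M w S (DiTree.depth φ)) DiTree.finite_nodes
    ⟨DiTree.Edge, rfl, DiTree.isTree⟩ ⟨[], trivial⟩
  exact (DiTree.truth hS φ hφ ⟨[], trivial⟩ le_rfl).1 hroot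
end
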